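/- Let C be a Z₂Z₄[ξ]-skew cyclic code, identified with a left R₄[x,θ₄]-submodule of R_θ, and let Ψ : C → R₄[x,θ₄]/⟨x^s−1⟩ be the projection onto the second coordinate. If Ψ(C) = ⟨g(x)+2a(x)⟩, then C = ⟨(f(x),0), (l(x), g(x)+2a(x))⟩, where f(x) |_r x^r−1 (mod 2), g(x)+2a(x) |_r x^s−1 in R₄[x,θ₄], and l(x) ∈ R₂[x,θ₂] satisfies deg(l(x)) < deg(f(x)) and f(x) |_r h_{g,a}(x)l(x) (mod 2), where x^s−1 = h_{g,a}(x)(g(x)+2a(x)). -/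

import Mathlib

set_option synthInstance.maxHeartbeats 1000000
set_option maxHeartbeats 2000000

noncomputable section
open Polynomial

abbrev Z4 : Type := ZMod 4
abbrev Z2 : Type := ZMod 2

/-- The mod 2 reduction map `Z₄ → Z₂`. -/
def bar : Z4 →+* Z2 := ZMod.castHom (m := 2) (by norm_num) Z2

/-- The ring `R₄ = Z₄[x]/⟨h⟩` (for `h` basic primitive, the Galois ring `GR(4,m)`). -/
abbrev R4 (h : Z4[X]) : Type := Z4[X] ⧸ Ideal.span {h}

/-- The ring `R₂ = Z₂[x]/⟨h̄⟩` (for `h` basic primitive, the field `F_{2^m}`). -/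
abbrev R2 (h : Z4[X]) : Type := Z2[X] ⧸ Ideal.span {h.map bar}

/-- `ξ`, the class of `x` in `R₄`. -/
def xi (h : Z4[X]) : R4 h := Ideal.Quotient.mk _ X

/-- `ξ̄`, the class of `x` in `R₂`. -/
def xibar (h : Z4[X]) : R2 h := Ideal.Quotient.mk _ X

/-- The coefficientwise mod 2 reduction `R₄ → R₂`. -/
def barR (h : Z4[X]) : R4 h →+* R2 h :=
  Ideal.quotientMap (Ideal.span {h.map bar}) (Polynomial.mapRingHom bar)
    (by
      rw [Ideal.span_le]
      intro p hp
      simp only [Set.mem_singleton_iff] at hp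
      subst hp
      exact Ideal.mem_comap.mpr (Ideal.subset_span (by simp)))

/-- The canonical representative (of degree `< deg h`) of an element of `R₄`. -/
def rep4 (h : Z4[X]) (α : R4 h) : Z4[X] := Quotient.out α %ₘ h

/-- The canonical representative (of degree `< deg h̄`) of an element of `R₂`. -/
def rep2 (h : Z4[X]) (α : R2 h) : Z2[X] := Quotient.out α %ₘ (h.map bar)

/-- The Frobenius map `θ₄ : ∑ vᵢ ξ^i ↦ ∑ vᵢ ξ^{2i}` of `R₄`, as a bare function:
substitute `ξ²` in the canonical representative. -/
def thetaFun4 (h : Z4[X]) (α : R4 h) : R4 h := Polynomial.aeval (xi h ^ 2) (rep4 h α)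

/-- The Frobenius map `θ₂ : ∑ vᵢ ξ̄^i ↦ ∑ vᵢ ξ̄^{2i}` of `R₂`, as a bare function. -/
def thetaFun2 (h : Z4[X]) (α : R2 h) : R2 h := Polynomial.aeval (xibar h ^ 2) (rep2 h α)

/-- A lift `ι : R₂ → R₄` with `ι` mod 2 the identity: lift the coefficients of the
canonical representative from `{0,1}`. -/
def iota (h : Z4[X]) (α : R2 h) : R4 h :=
  Ideal.Quotient.mk _ ((rep2 h α).sum fun i a => C ((a.val : Z4)) * X ^ i)

/-- `h` is a monic basic primitive polynomial of degree `m`:  `h` is monic, its mod 2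
reduction `h̄` is irreducible over `Z₂`, and the root `ξ̄` of `h̄` is a primitive
element, i.e. has multiplicative order `2^m - 1`. -/
def BasicPrimitive (h : Z4[X]) (m : ℕ) : Prop :=
  h.Monic ∧ h.natDegree = m ∧ Irreducible (h.map bar) ∧ orderOf (xibar h) = 2 ^ m - 1

/-- The scalar multiplication `γ * (α,β) = (γ̄α, γβ)` making `R₂^r × R₄^s` (or any
mixed-alphabet tuple space) an `R₄`-module. -/
def smulStar (h : Z4[X]) {α β : Type*} (γ : R4 h) (v : (α → R2 h) × (β → R4 h)) :
    (α → R2 h) × (β → R4 h) :=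
  (fun i => barR h γ * v.1 i, fun j => γ * v.2 j)

/-! ### Skew polynomial rings -/

/-- The additive endomorphism `p(x) ↦ pᶿ(x)·x` of `A[x]` (the twisted shift). -/
def Tmap {A : Type*} [CommRing A] (θ : A →+* A) : AddMonoid.End (Polynomial A) :=
  (AddMonoidHom.mulRight (X : Polynomial A)).comp (Polynomial.mapRingHom θ).toAddMonoidHom

/-- Left multiplication by the constant `a`, as an additive endomorphism of `A[x]`. -/
def Lmap {A : Type*} [CommRing A] (a : A) : AddMonoid.End (Polynomial A) :=
  AddMonoidHom.mulLeft (C a)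

/-- The skew polynomial ring `A[x;θ]`, realized as the subring of additive
endomorphisms of `A[x]` generated by the constants (acting by left multiplication)
and the twisted shift `Tmap θ`.  In this model multiplication is composition, so
`(a·xᵏ)·(b·xʲ) = a θᵏ(b) x^{k+j}`, i.e. `x·a = θ(a)·x`. -/
def SkewPolySubring (A : Type*) [CommRing A] (θ : A →+* A) :
    Subring (AddMonoid.End (Polynomial A)) :=
  Subring.closure ((Set.range (Lmap (A := A))) ∪ {Tmap θ})

/-- The skew polynomial ring `A[x;θ]` as a type. -/
abbrev Skew (A : Type*) [CommRing A] (θ : A →+* A) : Type _ := SkewPolySubring A θ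

/-- The element `x` of `A[x;θ]`. -/
def xSkew (A : Type*) [CommRing A] (θ : A →+* A) : Skew A θ :=
  ⟨Tmap θ, Subring.subset_closure (Set.mem_union_right _ rfl)⟩

/-- The constant `a` as an element of `A[x;θ]`. -/
def cSkew {A : Type*} [CommRing A] (θ : A →+* A) (a : A) : Skew A θ :=
  ⟨Lmap a, Subring.subset_closure (Set.mem_union_left _ ⟨a, rfl⟩)⟩

/-- The skew polynomial `∑ aᵢ xⁱ ∈ A[x;θ]` attached to coefficient data `p = ∑ aᵢ Xⁱ`. -/
def ofPoly {A : Type*} [CommRing A] (θ : A →+* A) (p : Polynomial A) : Skew A θ :=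
  p.sum fun i a => cSkew θ a * xSkew A θ ^ i

/-- The coefficient data of a skew polynomial, recovered by applying the
endomorphism to the polynomial `1`. -/
def toPoly {A : Type*} [CommRing A] {θ : A →+* A} (f : Skew A θ) : Polynomial A :=
  (f : AddMonoid.End (Polynomial A)) 1

/-- `g |ᵣ p` : `g` is a right divisor of `p` in `A[x;θ]`, i.e. `p = u·g`. -/
def RDvd {A : Type*} [CommRing A] {θ : A →+* A} (g p : Skew A θ) : Prop :=
  ∃ u : Skew A θ, p = u * g

/-- The left ideal `⟨x^n - 1⟩` of `A[x;θ]`. -/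
def skewIdeal (A : Type*) [CommRing A] (θ : A →+* A) (n : ℕ) :
    Submodule (Skew A θ) (Skew A θ) :=
  Submodule.span (Skew A θ) {xSkew A θ ^ n - 1}

/-- The quotient left `A[x;θ]`-module `A[x;θ]/⟨x^n-1⟩`. -/
abbrev SkewQuot (A : Type*) [CommRing A] (θ : A →+* A) (n : ℕ) : Type _ :=
  Skew A θ ⧸ skewIdeal A θ n

/-- The polynomial `c₀ + c₁X + ⋯ + c_{n-1}X^{n-1}` attached to a word `c ∈ Aⁿ`. -/
def wordPoly {A : Type*} [CommRing A] {n : ℕ} (c : Fin n → A) : Polynomial A :=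
  ∑ i : Fin n, C (c i) * X ^ (i : ℕ)

/-- Identify the word `c ∈ Aⁿ` with the class of `∑ cᵢ xⁱ` in `A[x;θ]/⟨x^n-1⟩`. -/
def wordToQuot {A : Type*} [CommRing A] (θ : A →+* A) {n : ℕ} (c : Fin n → A) :
    SkewQuot A θ n :=
  Submodule.Quotient.mk (ofPoly θ (wordPoly c))

/-- A linear code of length `n` over `A`: an `A`-submodule of `Aⁿ`, as a set. -/
def IsLinearCode (A : Type*) [CommRing A] {n : ℕ} (C : Set (Fin n → A)) : Prop :=
  0 ∈ C ∧ (∀ u ∈ C, ∀ v ∈ C, u + v ∈ C) ∧ ∀ γ : A, ∀ u ∈ C, γ • u ∈ C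

/-- The `θ`-cyclic shift `(c₀,…,c_{n-1}) ↦ (θ(c_{n-1}),θ(c₀),…,θ(c_{n-2}))`. -/
def skewShift {A : Type*} [CommRing A] (θ : A →+* A) {n : ℕ} [NeZero n]
    (c : Fin n → A) : Fin n → A :=
  fun i => θ (c (i - 1))
/-! ### The module `R_θ` and `Z₂Z₄[ξ]`-codes -/

/-- A `Z₂Z₄[ξ]`-linear code: an `R₄`-submodule of `R₂^r × R₄^s` (as a set). -/
def IsZ2Z4Linear (h : Z4[X]) {r s : ℕ} (C : Set ((Fin r → R2 h) × (Fin s → R4 h))) : Prop :=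
  0 ∈ C ∧ (∀ u ∈ C, ∀ v ∈ C, u + v ∈ C) ∧ ∀ γ : R4 h, ∀ u ∈ C, smulStar h γ u ∈ C

/-- The joint `θ`-cyclic shift on `R₂^r × R₄^s`. -/
def jointShift (h : Z4[X]) (θ2 : R2 h →+* R2 h) (θ4 : R4 h →+* R4 h) {r s : ℕ}
    [NeZero r] [NeZero s] (v : (Fin r → R2 h) × (Fin s → R4 h)) :
    (Fin r → R2 h) × (Fin s → R4 h) :=
  (skewShift θ2 v.1, skewShift θ4 v.2)

/-- The identification of `R₂^r × R₄^s` with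
`R_θ = R₂[x;θ₂]/⟨x^r-1⟩ × R₄[x;θ₄]/⟨x^s-1⟩`. -/
def pairToQuot (h : Z4[X]) (θ2 : R2 h →+* R2 h) (θ4 : R4 h →+* R4 h) {r s : ℕ}
    (v : (Fin r → R2 h) × (Fin s → R4 h)) :
    SkewQuot (R2 h) θ2 r × SkewQuot (R4 h) θ4 s :=
  (wordToQuot θ2 v.1, wordToQuot θ4 v.2)

/-- The coefficientwise mod 2 reduction `R₄[x;θ₄] → R₂[x;θ₂]`, `f ↦ f̄`. -/
def redSkew (h : Z4[X]) (θ2 : R2 h →+* R2 h) {θ4 : R4 h →+* R4 h}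
    (f : Skew (R4 h) θ4) : Skew (R2 h) θ2 :=
  ofPoly θ2 ((toPoly f).map (barR h))

/-- The left action of `R₄[x;θ₄]` on `R_θ`, `f * (g(x), h(x)) = (f̄ g mod (x^r-1), f h mod (x^s-1))`. -/
def smulRtheta (h : Z4[X]) (θ2 : R2 h →+* R2 h) (θ4 : R4 h →+* R4 h) {r s : ℕ}
    (f : Skew (R4 h) θ4)
    (u : SkewQuot (R2 h) θ2 r × SkewQuot (R4 h) θ4 s) :
    SkewQuot (R2 h) θ2 r × SkewQuot (R4 h) θ4 s :=
  (redSkew h θ2 f • u.1, f • u.2)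

/-- `D` is a left `R₄[x;θ₄]`-submodule of `R_θ` (with respect to the action above). -/
def IsLeftSubmodRtheta (h : Z4[X]) (θ2 : R2 h →+* R2 h) (θ4 : R4 h →+* R4 h) {r s : ℕ}
    (D : Set (SkewQuot (R2 h) θ2 r × SkewQuot (R4 h) θ4 s)) : Prop :=
  0 ∈ D ∧ (∀ u ∈ D, ∀ v ∈ D, u + v ∈ D) ∧
    ∀ f : Skew (R4 h) θ4, ∀ u ∈ D, smulRtheta h θ2 θ4 f u ∈ D

section SkewAux
variable {A : Type*} [CommRing A] (θ : A →+* A)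

theorem cSkew_mul (a b : A) : cSkew θ (a * b) = cSkew θ a * cSkew θ b := by
  apply Subtype.ext
  ext1 p
  show Polynomial.C (a * b) * p = Polynomial.C a * (Polynomial.C b * p)
  rw [Polynomial.C_mul, mul_assoc]

theorem cSkew_add (a b : A) : cSkew θ (a + b) = cSkew θ a + cSkew θ b := by
  apply Subtype.ext
  ext1 p
  show Polynomial.C (a + b) * p = Polynomial.C a * p + Polynomial.C b * p
  rw [Polynomial.C_add, add_mul]

theorem cSkew_zero : cSkew θ (0 : A) = 0 := by
  apply Subtype.ext
  ext1 p
  show Polynomial.C (0 : A) * p = 0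
  simp

theorem cSkew_one : cSkew θ (1 : A) = 1 := by
  apply Subtype.ext
  ext1 p
  show Polynomial.C (1 : A) * p = p
  simp

theorem xSkew_mul_cSkew (a : A) :
    xSkew A θ * cSkew θ a = cSkew θ (θ a) * xSkew A θ := by
  apply Subtype.ext
  ext1 p
  show (Polynomial.C a * p).map θ * X = Polynomial.C (θ a) * (p.map θ * X)
  rw [Polynomial.map_mul, Polynomial.map_C, mul_assoc]

theorem xSkew_pow_mul_cSkew (i : ℕ) (a : A) :
    xSkew A θ ^ i * cSkew θ a = cSkew θ ((θ ^ i) a) * xSkew A θ ^ i := by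
  induction i generalizing a with
  | zero => simp
  | succ k ih =>
    rw [pow_succ, mul_assoc, xSkew_mul_cSkew, ← mul_assoc, ih, mul_assoc, pow_succ θ]
    rfl

theorem ofPoly_add (p q : Polynomial A) : ofPoly θ (p + q) = ofPoly θ p + ofPoly θ q := by
  unfold ofPoly
  apply Polynomial.sum_add_index
  · intro i; simp [cSkew_zero]
  · intro i a b; simp [cSkew_add, add_mul]

/-- `ofPoly` as an additive map. -/
def ofPolyHom : Polynomial A →+ Skew A θ :=
  AddMonoidHom.mk' (ofPoly θ) (ofPoly_add θ)

theorem ofPoly_zero : ofPoly θ (0 : Polynomial A) = 0 := (ofPolyHom θ).map_zero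
theorem ofPoly_neg (p : Polynomial A) : ofPoly θ (-p) = - ofPoly θ p := (ofPolyHom θ).map_neg p
theorem ofPoly_sub (p q : Polynomial A) : ofPoly θ (p - q) = ofPoly θ p - ofPoly θ q :=
  (ofPolyHom θ).map_sub p q

theorem ofPoly_monomial (n : ℕ) (a : A) :
    ofPoly θ (Polynomial.monomial n a) = cSkew θ a * xSkew A θ ^ n := by
  unfold ofPoly
  rw [Polynomial.sum_monomial_index]
  simp [cSkew_zero]

theorem Tmap_pow_one (n : ℕ) : ((Tmap θ) ^ n) (1 : Polynomial A) = X ^ n := by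
  induction n with
  | zero => simp
  | succ k ih =>
    rw [pow_succ']
    show (((Tmap θ) ^ k) (1 : Polynomial A)).map θ * X = _
    rw [ih]; simp [pow_succ]

theorem toPoly_add (f g : Skew A θ) : toPoly (f + g) = toPoly f + toPoly g := rfl

theorem toPoly_ofPoly (p : Polynomial A) : toPoly (ofPoly θ p) = p := by
  induction p using Polynomial.induction_on' with
  | add p q hp hq => rw [ofPoly_add, toPoly_add, hp, hq]
  | monomial n a =>
    rw [ofPoly_monomial]
    have : toPoly (cSkew θ a * xSkew A θ ^ n) = Polynomial.C a * (((Tmap θ) ^ n) (1 : Polynomial A)) := rfl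
    rw [this, Tmap_pow_one, Polynomial.C_mul_X_pow_eq_monomial]

theorem monomial_mul_ofPoly (n : ℕ) (a : A) (q : Polynomial A) :
    cSkew θ a * xSkew A θ ^ n * ofPoly θ q = ofPoly θ (Polynomial.C a * q.map (θ ^ n) * X ^ n) := by
  induction q using Polynomial.induction_on' with
  | add p q hp hq => rw [ofPoly_add, mul_add, hp, hq, Polynomial.map_add, mul_add, add_mul, ofPoly_add]
  | monomial k b =>
    rw [ofPoly_monomial, Polynomial.map_monomial, Polynomial.C_mul_monomial,
      Polynomial.monomial_mul_X_pow, ofPoly_monomial, cSkew_mul, mul_assoc, ← mul_assoc (xSkew A θ ^ n),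
      xSkew_pow_mul_cSkew, add_comm k n, pow_add]
    simp only [mul_assoc]

theorem exists_ofPoly_mul (p q : Polynomial A) : ∃ t, ofPoly θ p * ofPoly θ q = ofPoly θ t := by
  induction p using Polynomial.induction_on' with
  | add p p' hp hq =>
    obtain ⟨t, ht⟩ := hp
    obtain ⟨t', ht'⟩ := hq
    exact ⟨t + t', by rw [ofPoly_add, add_mul, ht, ht', ofPoly_add]⟩
  | monomial n a =>
    refine ⟨Polynomial.C a * q.map (θ ^ n) * X ^ n, ?_⟩
    rw [ofPoly_monomial, monomial_mul_ofPoly]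

theorem ofPoly_C (a : A) : ofPoly θ (Polynomial.C a) = cSkew θ a := by
  rw [← Polynomial.monomial_zero_left, ofPoly_monomial, pow_zero, mul_one]

theorem ofPoly_X_pow (n : ℕ) : ofPoly θ (X ^ n : Polynomial A) = xSkew A θ ^ n := by
  rw [← Polynomial.monomial_one_right_eq_X_pow, ofPoly_monomial, cSkew_one, one_mul]

theorem ofPoly_one : ofPoly θ (1 : Polynomial A) = 1 := by
  rw [← Polynomial.C_1, ofPoly_C, cSkew_one]

theorem ofPoly_surj (f : Skew A θ) : ∃ p, ofPoly θ p = f := by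
  obtain ⟨f, hf⟩ := f
  induction hf using Subring.closure_induction with
  | mem x hx =>
    rcases hx with ⟨a, rfl⟩ | hx
    · exact ⟨Polynomial.C a, ofPoly_C θ a⟩
    · have hx' : x = Tmap θ := hx
      subst hx'
      exact ⟨X ^ 1, by rw [ofPoly_X_pow, pow_one]; rfl⟩
  | zero => exact ⟨0, ofPoly_zero θ⟩
  | one => exact ⟨1, ofPoly_one θ⟩
  | add x y hx hy ihx ihy =>
    obtain ⟨p, hp⟩ := ihx
    obtain ⟨q, hq⟩ := ihy
    exact ⟨p + q, by rw [ofPoly_add, hp, hq]; rfl⟩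
  | neg x hx ih =>
    obtain ⟨p, hp⟩ := ih
    exact ⟨-p, by rw [ofPoly_neg, hp]; rfl⟩
  | mul x y hx hy ihx ihy =>
    obtain ⟨p, hp⟩ := ihx
    obtain ⟨q, hq⟩ := ihy
    obtain ⟨t, ht⟩ := exists_ofPoly_mul θ p q
    exact ⟨t, by rw [← ht, hp, hq]; rfl⟩

/-- Right division in a skew polynomial ring over a field. -/
theorem skew_div (hA : IsField A) (f : Polynomial A) (hf : f ≠ 0) (p : Polynomial A) :
    ∃ (q : Skew A θ) (l : Polynomial A), l.degree < f.degree ∧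
      ofPoly θ p = q * ofPoly θ f + ofPoly θ l := by
  haveI : IsDomain A := hA.isDomain
  induction hd : p.degree using WellFoundedLT.induction generalizing p with
  | ind d ih =>
  subst hd
  by_cases hlt : p.degree < f.degree
  · exact ⟨0, p, hlt, by rw [zero_mul, zero_add]⟩
  push Not at hlt
  have hp0 : p ≠ 0 := by
    rintro rfl
    rw [Polynomial.degree_zero, le_bot_iff, Polynomial.degree_eq_bot] at hlt
    exact hf hlt
  have hnat : f.natDegree ≤ p.natDegree := Polynomial.natDegree_le_natDegree hlt
  set i := p.natDegree - f.natDegree with hi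
  obtain ⟨b, hb⟩ := hA.mul_inv_cancel (Polynomial.leadingCoeff_ne_zero.mpr hf)
  have hb' : (θ ^ i) f.leadingCoeff * (θ ^ i) b = 1 := by rw [← map_mul, hb, map_one]
  have hne : (θ ^ i) f.leadingCoeff ≠ 0 := left_ne_zero_of_mul_eq_one hb'
  have hne2 : (θ ^ i) b ≠ 0 := right_ne_zero_of_mul_eq_one hb'
  set a := p.leadingCoeff * (θ ^ i) b with ha
  have ha0 : a ≠ 0 := mul_ne_zero (Polynomial.leadingCoeff_ne_zero.mpr hp0) hne2
  set t := Polynomial.C a * f.map (θ ^ i) * X ^ i with ht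
  have hmap0 : f.map (θ ^ i) ≠ 0 := by
    intro h0
    apply hne
    have := congrArg (fun w => w.coeff f.natDegree) h0
    simpa using this
  have hlead : (f.map (θ ^ i)).leadingCoeff = (θ ^ i) f.leadingCoeff :=
    Polynomial.leadingCoeff_map_of_leadingCoeff_ne_zero _ hne
  have hdegm : (f.map (θ ^ i)).degree = f.degree :=
    Polynomial.degree_map_eq_of_leadingCoeff_ne_zero _ hne
  have htl : t.leadingCoeff = p.leadingCoeff := by
    rw [ht, Polynomial.leadingCoeff_mul_X_pow, Polynomial.leadingCoeff_mul, Polynomial.leadingCoeff_C, hlead, ha,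
      mul_assoc, mul_comm ((θ ^ i) b), hb', mul_one]
  have htd : t.degree = p.degree := by
    rw [ht, Polynomial.degree_mul, Polynomial.degree_mul, Polynomial.degree_C ha0, hdegm, zero_add, Polynomial.degree_X_pow,
      Polynomial.degree_eq_natDegree hf, Polynomial.degree_eq_natDegree hp0]
    norm_cast
    omega
  have hdec : (p - t).degree < p.degree := Polynomial.degree_sub_lt htd.symm hp0 htl.symm
  obtain ⟨q, l, hl, hq⟩ := ih _ hdec (p - t) rfl
  refine ⟨q + cSkew θ a * xSkew A θ ^ i, l, hl, ?_⟩
  rw [ofPoly_sub, sub_eq_iff_eq_add] at hq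
  rw [hq, add_mul, monomial_mul_ofPoly]
  abel

/-- Words. -/
theorem ofPoly_wordPoly {n : ℕ} (c : Fin n → A) :
    ofPoly θ (wordPoly c) = ∑ i : Fin n, cSkew θ (c i) * xSkew A θ ^ (i : ℕ) := by
  unfold wordPoly
  have := map_sum (ofPolyHom θ) (fun i : Fin n => Polynomial.C (c i) * X ^ (i : ℕ)) Finset.univ
  refine this.trans (Finset.sum_congr rfl fun i _ => ?_)
  rw [Polynomial.C_mul_X_pow_eq_monomial]
  exact ofPoly_monomial θ _ _

theorem wordToQuot_add {n : ℕ} (c d : Fin n → A) :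
    wordToQuot θ (c + d) = wordToQuot θ c + wordToQuot θ d := by
  unfold wordToQuot
  rw [← Submodule.Quotient.mk_add]
  congr 1
  simp only [ofPoly_wordPoly, Pi.add_apply, cSkew_add, add_mul, Finset.sum_add_distrib]

theorem wordToQuot_zero {n : ℕ} : wordToQuot θ (0 : Fin n → A) = 0 := by
  unfold wordToQuot
  rw [ofPoly_wordPoly]
  simp [cSkew_zero]

theorem wordToQuot_smul {n : ℕ} (a : A) (c : Fin n → A) :
    wordToQuot θ (fun i => a * c i) = cSkew θ a • wordToQuot θ c := by
  unfold wordToQuot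
  rw [← Submodule.Quotient.mk_smul]
  congr 1
  simp only [ofPoly_wordPoly, cSkew_mul, smul_eq_mul, Finset.mul_sum, mul_assoc]

theorem wordToQuot_shift {n : ℕ} [NeZero n] (c : Fin n → A) :
    wordToQuot θ (skewShift θ c) = xSkew A θ • wordToQuot θ c := by
  unfold wordToQuot
  rw [← Submodule.Quotient.mk_smul, Submodule.Quotient.eq, ofPoly_wordPoly, ofPoly_wordPoly,
    smul_eq_mul, Finset.mul_sum]
  rw [← Equiv.sum_comp (Equiv.addRight (1 : Fin n))
    (fun i : Fin n => cSkew θ (skewShift θ c i) * xSkew A θ ^ (i : ℕ)), ← Finset.sum_sub_distrib]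
  refine Submodule.sum_mem _ fun i _ => ?_
  have h1 : skewShift θ c ((Equiv.addRight (1 : Fin n)) i) = θ (c i) := by
    simp [skewShift]
  rw [h1, ← mul_assoc, xSkew_mul_cSkew, mul_assoc, ← pow_succ', ← mul_sub]
  apply Submodule.smul_mem (skewIdeal A θ n) (cSkew θ (θ (c i)))
  have h2 : (((Equiv.addRight (1 : Fin n)) i : Fin n) : ℕ) = ((i : ℕ) + 1) % n := by
    simp [Fin.val_add]
  rw [h2]
  rcases Nat.lt_or_ge ((i : ℕ) + 1) n with hlt | hge
  · rw [Nat.mod_eq_of_lt hlt, sub_self]; exact Submodule.zero_mem _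
  · have h3 : (i : ℕ) + 1 = n := by have := i.2; omega
    rw [h3, Nat.mod_self, pow_zero, ← neg_sub]
    exact Submodule.neg_mem _ (Submodule.subset_span rfl)

end SkewAux

section RthetaAux
variable (h : Z4[X]) (θ2 : R2 h →+* R2 h) (θ4 : R4 h →+* R4 h)

theorem barR_surj : Function.Surjective (barR h) := by
  apply Ideal.quotientMap_surjective
  exact Polynomial.map_surjective _ (ZMod.castHom_surjective _)

theorem redSkew_ofPoly (p : Polynomial (R4 h)) :
    redSkew h θ2 (ofPoly θ4 p) = ofPoly θ2 (p.map (barR h)) := by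
  unfold redSkew
  rw [toPoly_ofPoly]

theorem redSkew_surj (q : Skew (R2 h) θ2) : ∃ c : Skew (R4 h) θ4, redSkew h θ2 c = q := by
  obtain ⟨p, rfl⟩ := ofPoly_surj θ2 q
  obtain ⟨p', rfl⟩ := Polynomial.map_surjective _ (barR_surj h) p
  exact ⟨ofPoly θ4 p', redSkew_ofPoly h θ2 θ4 p'⟩

theorem image_isLeftSubmod {r s : ℕ} [NeZero r] [NeZero s]
    (C : Set ((Fin r → R2 h) × (Fin s → R4 h))) (hlin : IsZ2Z4Linear h C)
    (hcyc : ∀ v ∈ C, jointShift h θ2 θ4 v ∈ C) :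
    IsLeftSubmodRtheta h θ2 θ4 (pairToQuot h θ2 θ4 '' C) := by
  obtain ⟨h0, hadd, hsm⟩ := hlin
  have hA : ∀ u ∈ pairToQuot h θ2 θ4 '' C, ∀ v ∈ pairToQuot h θ2 θ4 '' C,
      u + v ∈ pairToQuot h θ2 θ4 '' C := by
    rintro _ ⟨u, hu, rfl⟩ _ ⟨v, hv, rfl⟩
    exact ⟨u + v, hadd u hu v hv, Prod.ext (wordToQuot_add θ2 _ _) (wordToQuot_add θ4 _ _)⟩
  refine ⟨⟨0, h0, Prod.ext (wordToQuot_zero θ2) (wordToQuot_zero θ4)⟩, hA, ?_⟩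
  intro f u hu
  obtain ⟨p, rfl⟩ := ofPoly_surj θ4 f
  unfold smulRtheta
  rw [redSkew_ofPoly]
  induction p using Polynomial.induction_on' with
  | add p q hp hq =>
    have := hA _ hp _ hq
    rw [Polynomial.map_add, ofPoly_add, ofPoly_add, add_smul, add_smul]
    exact this
  | monomial n a =>
    rw [Polynomial.map_monomial, ofPoly_monomial, ofPoly_monomial, mul_smul, mul_smul]
    have key : (xSkew (R2 h) θ2 ^ n • u.1, xSkew (R4 h) θ4 ^ n • u.2) ∈ pairToQuot h θ2 θ4 '' C := by
      induction n with
      | zero => rw [pow_zero, pow_zero, one_smul, one_smul]; exact hu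
      | succ k ih =>
        obtain ⟨v, hv, hvu⟩ := ih
        have e1 := congrArg Prod.fst hvu
        have e2 := congrArg Prod.snd hvu
        refine ⟨jointShift h θ2 θ4 v, hcyc v hv, Prod.ext ?_ ?_⟩
        · refine (wordToQuot_shift θ2 v.1).trans ?_
          show _ = xSkew (R2 h) θ2 ^ (k + 1) • u.1
          rw [pow_succ', mul_smul]
          exact congrArg _ e1
        · refine (wordToQuot_shift θ4 v.2).trans ?_
          show _ = xSkew (R4 h) θ4 ^ (k + 1) • u.2
          rw [pow_succ', mul_smul]
          exact congrArg _ e2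
    obtain ⟨v, hv, hvu⟩ := key
    have e1 := congrArg Prod.fst hvu
    have e2 := congrArg Prod.snd hvu
    refine ⟨smulStar h a v, hsm a v hv, Prod.ext ?_ ?_⟩
    · exact (wordToQuot_smul θ2 (barR h a) v.1).trans (congrArg _ e1)
    · exact (wordToQuot_smul θ4 a v.2).trans (congrArg _ e2)

end RthetaAux

/-- If `Ψ(C) = ⟨g(x)+2a(x)⟩` with `g+2a |ᵣ x^s−1` in `R₄[x,θ₄]`,
say `x^s−1 = h_{g,a}(x)(g(x)+2a(x))`, then `C = ⟨(f(x),0), (l(x),g(x)+2a(x))⟩`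
where `f |ᵣ x^r−1 (mod 2)`, `deg l < deg f` and `f |ᵣ h_{g,a} l (mod 2)`. -/
theorem z2z4_skew_cyclic_generators_case_ii
    (m : ℕ) (hm : 1 ≤ m) (h : Z4[X]) (hbp : BasicPrimitive h m)
    (θ4 : R4 h →+* R4 h) (hθ4 : ⇑θ4 = thetaFun4 h)
    (θ2 : R2 h →+* R2 h) (hθ2 : ⇑θ2 = thetaFun2 h)
    (r s : ℕ) [NeZero r] [NeZero s]
    (C : Set ((Fin r → R2 h) × (Fin s → R4 h))) (hlin : IsZ2Z4Linear h C)
    (hcyc : ∀ v ∈ C, jointShift h θ2 θ4 v ∈ C)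
    (g a hga : Polynomial (R4 h))
    (hgadvd : xSkew (R4 h) θ4 ^ s - 1 = ofPoly θ4 hga * ofPoly θ4 (g + 2 * a))
    (hPsi : Prod.snd '' (pairToQuot h θ2 θ4 '' C) =
      ↑(Submodule.span (Skew (R4 h) θ4) {(Submodule.Quotient.mk (p := skewIdeal (R4 h) θ4 s) (ofPoly θ4 (g + 2 * a)))})) :
    ∃ f l : Polynomial (R2 h),
      RDvd (ofPoly θ2 f) (xSkew (R2 h) θ2 ^ r - 1) ∧
      l.degree < f.degree ∧
      RDvd (ofPoly θ2 f) (ofPoly θ2 (hga.map (barR h)) * ofPoly θ2 l) ∧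
      pairToQuot h θ2 θ4 '' C =
        {u | ∃ c1 c2 : Skew (R4 h) θ4,
          u = smulRtheta h θ2 θ4 c1 ((Submodule.Quotient.mk (p := skewIdeal (R2 h) θ2 r) (ofPoly θ2 f)), 0)
            + smulRtheta h θ2 θ4 c2 ((Submodule.Quotient.mk (p := skewIdeal (R2 h) θ2 r) (ofPoly θ2 l)), (Submodule.Quotient.mk (p := skewIdeal (R4 h) θ4 s) (ofPoly θ4 (g + 2 * a))))} := by
  classical
  have hD := image_isLeftSubmod h θ2 θ4 C hlin hcyc
  obtain ⟨-, -, hirr, -⟩ := hbp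
  have hfield : IsField (R2 h) := by
    haveI := PrincipalIdealRing.isMaximal_of_irreducible hirr
    exact (Ideal.Quotient.maximal_ideal_iff_isField_quotient _).mp this
  haveI : Nontrivial (R2 h) := hfield.nontrivial
  generalize hDdef : pairToQuot h θ2 θ4 '' C = D at hD hPsi ⊢
  obtain ⟨hD0, hDadd, hDsm⟩ := hD
  have hDneg : ∀ u ∈ D, -u ∈ D := by
    intro u hu
    have := hDsm (ofPoly θ4 (-1)) u hu
    unfold smulRtheta at this
    rw [redSkew_ofPoly, Polynomial.map_neg, Polynomial.map_one, ofPoly_neg, ofPoly_neg, ofPoly_one,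
      ofPoly_one, neg_smul, neg_smul, one_smul, one_smul] at this
    exact this
  -- the left ideal of first coordinates
  let I : Submodule (Skew (R2 h) θ2) (Skew (R2 h) θ2) :=
    { carrier := {p | (Submodule.Quotient.mk (p := skewIdeal (R2 h) θ2 r) p,
        (0 : SkewQuot (R4 h) θ4 s)) ∈ D}
      zero_mem' := hD0
      add_mem' := by
        intro p q hp hq
        have := hDadd _ hp _ hq
        rw [Prod.mk_add_mk, add_zero, ← Submodule.Quotient.mk_add] at this
        exact this
      smul_mem' := by
        intro c p hp
        obtain ⟨c', rfl⟩ := redSkew_surj h θ2 θ4 c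
        have := hDsm c' _ hp
        unfold smulRtheta at this
        rw [smul_zero, ← Submodule.Quotient.mk_smul] at this
        exact this }
  have hI : ∀ p, p ∈ I ↔ (Submodule.Quotient.mk (p := skewIdeal (R2 h) θ2 r) p,
        (0 : SkewQuot (R4 h) θ4 s)) ∈ D := fun p => Iff.rfl
  have hxr : xSkew (R2 h) θ2 ^ r - 1 ∈ I := by
    rw [hI]
    have : Submodule.Quotient.mk (p := skewIdeal (R2 h) θ2 r) (xSkew (R2 h) θ2 ^ r - 1) = 0 :=
      (Submodule.Quotient.mk_eq_zero _).mpr (Submodule.subset_span rfl)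
    rw [this]
    exact hD0
  have hxrp : ofPoly θ2 (X ^ r - 1) = xSkew (R2 h) θ2 ^ r - 1 := by
    rw [ofPoly_sub, ofPoly_X_pow, ofPoly_one]
  let S : Set (Polynomial (R2 h)) := {p | p ≠ 0 ∧ ofPoly θ2 p ∈ I}
  have hS : S.Nonempty := ⟨X ^ r - 1, Polynomial.X_pow_sub_C_ne_zero (NeZero.pos r) (1 : R2 h), by
    rw [hxrp]; exact hxr⟩
  obtain ⟨f, ⟨hf0, hfI⟩, hfmin⟩ :=
    (WellFounded.onFun (f := fun p : Polynomial (R2 h) => p.degree) wellFounded_lt).has_min S hS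
  have hgen : ∀ p : Skew (R2 h) θ2, p ∈ I → RDvd (ofPoly θ2 f) p := by
    intro p hp
    obtain ⟨p, rfl⟩ := ofPoly_surj θ2 p
    obtain ⟨q, l, hl, hq⟩ := skew_div θ2 hfield f hf0 p
    have hlI : ofPoly θ2 l ∈ I := by
      have : ofPoly θ2 l = ofPoly θ2 p - q • ofPoly θ2 f := by
        rw [hq, smul_eq_mul, add_sub_cancel_left]
      rw [this]
      exact I.sub_mem hp (I.smul_mem q hfI)
    have hl0 : l = 0 := by
      by_contra hne
      exact hfmin l ⟨hne, hlI⟩ hl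
    rw [hl0, ofPoly_zero, add_zero] at hq
    exact ⟨q, hq⟩
  -- the element over the generator
  have hGmem : (Submodule.Quotient.mk (p := skewIdeal (R4 h) θ4 s) (ofPoly θ4 (g + 2 * a))) ∈
      Prod.snd '' D := by
    rw [hPsi]
    exact Submodule.subset_span rfl
  obtain ⟨⟨u1, u2⟩, huD, hu2⟩ := hGmem
  obtain ⟨l0s, rfl⟩ := Submodule.Quotient.mk_surjective _ u1
  obtain ⟨l0, rfl⟩ := ofPoly_surj θ2 l0s
  obtain ⟨q, l, hl, hq⟩ := skew_div θ2 hfield f hf0 l0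
  simp only at hu2
  subst hu2
  have hlD : (Submodule.Quotient.mk (p := skewIdeal (R2 h) θ2 r) (ofPoly θ2 l),
      Submodule.Quotient.mk (p := skewIdeal (R4 h) θ4 s) (ofPoly θ4 (g + 2 * a))) ∈ D := by
    have h1 := hDadd _ huD _ (hDneg _ ((hI _).mp (I.smul_mem q hfI)))
    rw [Prod.neg_mk, Prod.mk_add_mk, neg_zero, add_zero, hq, smul_eq_mul,
      ← Submodule.Quotient.mk_neg, ← Submodule.Quotient.mk_add] at h1
    have e : q * ofPoly θ2 f + ofPoly θ2 l + -(q * ofPoly θ2 f) = ofPoly θ2 l := by abel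
    rw [e] at h1
    exact h1
  refine ⟨f, l, hgen _ hxr, hl, ?_, ?_⟩
  · apply hgen
    rw [hI]
    have h1 := hDsm (ofPoly θ4 hga) _ hlD
    unfold smulRtheta at h1
    rw [redSkew_ofPoly, ← Submodule.Quotient.mk_smul, ← Submodule.Quotient.mk_smul, smul_eq_mul,
      smul_eq_mul, ← hgadvd] at h1
    have h2 : Submodule.Quotient.mk (p := skewIdeal (R4 h) θ4 s) (xSkew (R4 h) θ4 ^ s - 1) = 0 :=
      (Submodule.Quotient.mk_eq_zero _).mpr (Submodule.subset_span rfl)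
    rw [h2] at h1
    exact h1
  · ext u
    constructor
    · intro hu
      have hu2 : u.2 ∈ Prod.snd '' D := ⟨u, hu, rfl⟩
      rw [hPsi] at hu2
      obtain ⟨c2, hc2⟩ := Submodule.mem_span_singleton.mp hu2
      have hw := hDadd _ hu _ (hDneg _ (hDsm c2 _ hlD))
      obtain ⟨p, hp⟩ := Submodule.Quotient.mk_surjective _
        (u.1 - redSkew h θ2 c2 • Submodule.Quotient.mk (p := skewIdeal (R2 h) θ2 r) (ofPoly θ2 l))
      have hpI : p ∈ I := by
        rw [hI, hp]
        convert hw using 1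
        refine Prod.ext ?_ ?_
        · exact sub_eq_add_neg _ _
        · show 0 = u.2 + -(c2 • _)
          rw [hc2, add_neg_cancel]
      obtain ⟨t, rfl⟩ := hgen p hpI
      obtain ⟨c1, rfl⟩ := redSkew_surj h θ2 θ4 t
      refine ⟨c1, c2, Prod.ext ?_ ?_⟩
      · show u.1 = redSkew h θ2 c1 • _ + redSkew h θ2 c2 • _
        rw [← Submodule.Quotient.mk_smul _ (redSkew h θ2 c1), smul_eq_mul, hp, sub_add_cancel]
      · show u.2 = c1 • 0 + c2 • _
        rw [smul_zero, zero_add, hc2]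
    · rintro ⟨c1, c2, rfl⟩
      exact hDadd _ (hDsm c1 _ ((hI _).mp hfI)) _ (hDsm c2 _ hlD)
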